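/- Let G be a connected unicyclic graph whose unique cycle is an odd cycle C of length 2k+1 with vertex set {x₁,…,x_{2k+1}}, let I = I(G), let u ∈ S be a monomial and m ≥ 1 an integer. Then u ∈ (Iᵐ : 𝔪) \ Iᵐ if and only if u = (x₁x₂⋯x_{2k+1})·∏_{e∈E₁} e^{m_e} for some subset E₁ ⊆ E(G) and positive integers m_e (e ∈ E₁) such that E*(G) ⊆ E₁ and Σ_{e∈E₁} m_e = m − k − 1, where each edge e is identified with its degree-2 monomial. -/

import Mathlib

open MvPolynomial

/-- The monomial `X i * X j` attached to an edge of a graph. -/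
noncomputable def edgeMon {n : ℕ} (K : Type*) [Field K] :
    Sym2 (Fin n) → MvPolynomial (Fin n) K :=
  Sym2.lift ⟨fun i j => X i * X j, fun _ _ => mul_comm _ _⟩

/-- An edge is a leaf if one of its endpoints is adjacent to exactly one vertex. -/
def IsLeafEdge {n : ℕ} (G : SimpleGraph (Fin n)) (e : Sym2 (Fin n)) : Prop :=
  ∃ x, x ∈ e ∧ ∃! y, G.Adj x y

/-!
A monomial `x ^ d` lies in `I(G) ^ m` exactly when `G` has a `d`-matching with `m` edges, so it lies
in `(I(G) ^ m : 𝔪) \ I(G) ^ m` exactly when the capacity vector `d` is critical: it admits no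
matching with `m` edges, but raising any single capacity creates one. An exchange argument shows
that, when the incidence map of `G` is injective and hits every `δ_i + δ_j`, a critical `d` is one
for which each `d + δ_i` is the degree vector of a multiset of edges.

For an odd unicyclic graph with cycle `C` the incidence map is injective, since its matrix is square
and `2 δ_i` is in its image. The solution of `D y = 1_C + δ_i` is explicit: it is supported on the
lasso formed by a path from `i` to the cycle and the cycle itself, takes only the values `1` and
`-1` alternately on the path, and is nonnegative on the cycle. Writing `d = 1_C + D f`, the vector
`d + δ_i` is therefore the degree vector of a multiset of edges for all `i` if and only if `f` is
nonnegative and at least `1` on the edges where some lasso solution takes the value `-1`; these are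
the edges of `E*(G)`.
-/

lemma injective_of_single_mem_range {R ι κ : Type*} [CommRing R] [IsDomain R] [Fintype ι]
    [Fintype κ] [DecidableEq κ] (φ : (ι → R) →ₗ[R] (κ → R))
    (hcard : Fintype.card ι ≤ Fintype.card κ) {r : R} (hr : r ≠ 0)
    (hrange : ∀ k, Pi.single k r ∈ LinearMap.range φ) : Function.Injective φ := by
  have hsmul_inj : Function.Injective (LinearMap.lsmul R (κ → R) r) := smul_right_injective _ hr
  have hsmul_le : LinearMap.range (LinearMap.lsmul R (κ → R) r) ≤ LinearMap.range φ := by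
    rintro _ ⟨x, rfl⟩
    have hx : r • x = ∑ k, x k • Pi.single k r := by
      ext k
      simp [Finset.sum_apply, Pi.single_apply, mul_comm]
    rw [LinearMap.lsmul_apply, hx]
    exact Submodule.sum_smul_mem _ _ fun k _ => hrange k
  have hrank : Fintype.card κ ≤ Module.finrank R (LinearMap.range φ) := by
    simpa [LinearMap.finrank_range_of_inj hsmul_inj] using Submodule.finrank_mono hsmul_le
  have hnullity := (LinearMap.ker φ).finrank_quotient_add_finrank
  rw [φ.quotKerEquivRange.finrank_eq, Module.finrank_fintype_fun_eq_card] at hnullity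
  have hker : Module.rank R (LinearMap.ker φ) < Cardinal.aleph0 :=
    (LinearMap.ker φ).rank_le.trans_lt (Module.rank_lt_aleph0 R _)
  rw [← LinearMap.ker_eq_bot, ← Submodule.rank_eq_zero (R := R)]
  refine ((Cardinal.toNat_eq_zero).1 ?_).resolve_right hker.not_ge
  change Module.finrank R (LinearMap.ker φ) = 0
  omega

lemma eq_single_of_sum_le {ι M : Type*} [Fintype ι] [DecidableEq ι] [AddCommMonoid M]
    [PartialOrder M] [IsOrderedCancelAddMonoid M] {h : ι → M} (h0 : 0 ≤ h) {i : ι}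
    (hsum : ∑ j, h j ≤ h i) : h = Pi.single i (h i) := by
  have hle : ∑ j, h j ≤ ∑ j, (Pi.single i (h i) : ι → M) j := by simpa using hsum
  have hge : ∀ j ∈ Finset.univ, (Pi.single i (h i) : ι → M) j ≤ h j := fun j _ => by
    obtain rfl | hji := eq_or_ne j i
    · simp
    · simpa [hji] using h0 j
  ext j
  exact ((Finset.sum_eq_sum_iff_of_le hge).mp (le_antisymm (Finset.sum_le_sum hge) hle) j
    (Finset.mem_univ j)).symm

lemma exists_finset_weights_iff {α M : Type*} [AddCommMonoid M] {s t : Set α} [Fintype s]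
    (hts : t ⊆ s) (φ : α → M) (P : ℕ → M → Prop) :
    (∃ f : s → ℕ, (∀ e : s, ↑e ∈ t → 1 ≤ f e) ∧ P (∑ e, f e) (∑ e, f e • φ e)) ↔
      ∃ (E : Finset α) (g : α → ℕ), ↑E ⊆ s ∧ t ⊆ ↑E ∧ (∀ e ∈ E, 1 ≤ g e) ∧
        P (∑ e ∈ E, g e) (∑ e ∈ E, g e • φ e) := by
  classical
  constructor
  · rintro ⟨f, ht, hP⟩
    obtain ⟨g, rfl⟩ : ∃ g : α → ℕ, f = fun e : s => g e :=
      ⟨Function.extend Subtype.val f 0,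
        funext fun e => (Subtype.val_injective.extend_apply f 0 e).symm⟩
    refine ⟨s.toFinset.filter (g · ≠ 0), g, by simp +contextual [Set.subset_def], fun e he => ?_,
      by simp [Nat.one_le_iff_ne_zero], ?_⟩
    · simpa using ⟨hts he, Nat.one_le_iff_ne_zero.1 (ht ⟨e, hts he⟩ he)⟩
    · rw [Finset.sum_set_coe, Finset.sum_set_coe s (f := fun e => g e • φ e)] at hP
      have hφ : ∑ e ∈ s.toFinset with g e ≠ 0, g e • φ e = ∑ e ∈ s.toFinset, g e • φ e :=
        Finset.sum_filter_of_ne fun e _ he h0 => he (by rw [h0, zero_smul])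
      rwa [Finset.sum_filter_ne_zero, hφ]
  · rintro ⟨E, g, hE, ht, hpos, hP⟩
    have hEs : s.toFinset ∩ E = E := Finset.inter_eq_right.2 (by simpa using hE)
    refine ⟨fun e => if e.1 ∈ E then g e else 0, fun e he => ?_, ?_⟩
    · exact (hpos e (ht he)).trans_eq (if_pos (ht he)).symm
    · simp only [ite_smul, zero_smul]
      rwa [Finset.sum_set_coe s (f := fun e => if e ∈ E then g e else 0),
        Finset.sum_set_coe s (f := fun e => if e ∈ E then g e • φ e else 0), Finset.sum_ite_mem,
        Finset.sum_ite_mem, hEs]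

section Walks

variable {V : Type*} {G : SimpleGraph V} {v : V} {c : G.Walk v v}

lemma notMem_edges_cons {a b w : V} {h : G.Adj a b} {q : G.Walk b w} {e : G.edgeSet} :
    ↑e ∉ (SimpleGraph.Walk.cons h q).edges ↔ e ≠ ⟨s(a, b), h⟩ ∧ ↑e ∉ q.edges := by
  rw [SimpleGraph.Walk.edges_cons, List.mem_cons, not_or, Ne, Subtype.ext_iff]

lemma exists_trail_disjoint_edges {i w : V} (p : G.Walk i w) (hw : w ∈ c.support) :
    ∃ x ∈ c.support, ∃ q : G.Walk i x,
      q.IsTrail ∧ q.edges ⊆ p.edges ∧ q.edges.Disjoint c.edges := by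
  classical
  suffices ∃ x ∈ c.support, ∃ q : G.Walk i x, q.edges ⊆ p.edges ∧ q.edges.Disjoint c.edges by
    obtain ⟨x, hx, q, hqp, hqc⟩ := this
    have hsub : q.bypass.edges ⊆ q.edges := q.edges_bypass_subset_edges
    exact ⟨x, hx, q.bypass, q.bypass_isPath.isTrail, List.Subset.trans hsub hqp,
      List.disjoint_of_subset_left hsub hqc⟩
  induction p with
  | nil => exact ⟨_, hw, .nil, by simp, by simp⟩
  | @cons i j w h p ih =>
    by_cases hi : i ∈ c.support
    · exact ⟨i, hi, .nil, by simp, by simp⟩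
    · obtain ⟨x, hx, q, hqp, hqc⟩ := ih hw
      refine ⟨x, hx, .cons h q, List.cons_subset_cons _ hqp, ?_⟩
      rw [SimpleGraph.Walk.edges_cons, List.disjoint_cons_left]
      exact ⟨fun he => hi (c.fst_mem_support_of_mem_edges he), hqc⟩

lemma exists_walk_notMem_edges (hconn : G.Connected) (e : Sym2 V) (w : V) :
    ∃ x ∈ e, ∃ p : G.Walk x w, e ∉ p.edges := by
  have hsuffix : ∀ {a : V} (p : G.Walk a w), e ∈ p.edges →
      ∃ x ∈ e, ∃ q : G.Walk x w, e ∉ q.edges := by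
    intro a p
    induction p with
    | nil => simp
    | @cons a b _ h p ih =>
      intro he
      by_cases hep : e ∈ p.edges
      · exact ih hep
      · obtain rfl : e = s(a, b) := (List.mem_cons.mp he).resolve_right hep
        exact ⟨b, Sym2.mem_mk_right a b, p, hep⟩
  obtain ⟨a, b⟩ := e
  obtain ⟨p⟩ := hconn a w
  by_cases he : s(a, b) ∈ p.edges
  · exact hsuffix p he
  · exact ⟨a, Sym2.mem_mk_left a b, p, he⟩

lemma exists_ne_adj_of_mem_cycle (hc : c.IsCycle) {a : V} (ha : a ∈ c.support) (b : V) :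
    ∃ w ≠ b, G.Adj a w := by
  classical
  have hd := hc.rotate ha
  obtain hsnd | hsnd := ne_or_eq (c.rotate a ha).snd b
  · exact ⟨_, hsnd, SimpleGraph.Walk.adj_snd hd.not_nil⟩
  · exact ⟨_, fun hpen => hd.snd_ne_penultimate (hsnd.trans hpen.symm),
      (SimpleGraph.Walk.adj_penultimate hd.not_nil).symm⟩

lemma card_edgeSet_of_unique_cycle [Fintype V] [Fintype G.edgeSet] (hconn : G.Connected)
    (hc : c.IsCycle)
    (huniq : ∀ (w : V) (p : G.Walk w w), p.IsCycle → ∀ e, e ∈ p.edges ↔ e ∈ c.edges) :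
    Fintype.card G.edgeSet = Fintype.card V := by
  classical
  have he : s(v, c.snd) ∈ c.edges := SimpleGraph.Walk.mk_start_snd_mem_edges hc.not_nil
  have htree : (G.deleteEdges {s(v, c.snd)}).IsTree := by
    refine ⟨hconn.connected_delete_edge_of_not_isBridge
      fun hbridge => hbridge.notMem_edges_of_isCycle hc he, fun w p hp => ?_⟩
    have hle : G.deleteEdges {s(v, c.snd)} ≤ G := SimpleGraph.deleteEdges_le _
    have hep : s(v, c.snd) ∈ p.edges := by
      simpa using (huniq w (p.mapLe hle) (hp.mapLe hle) _).2 he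
    simpa using p.edges_subset_edgeSet hep
  have hcard := htree.card_edgeFinset
  have herase : (G.deleteEdges {s(v, c.snd)}).edgeFinset = G.edgeFinset.erase s(v, c.snd) := by
    ext e
    simp [and_comm]
  have heG : s(v, c.snd) ∈ G.edgeFinset := by simpa using c.edges_subset_edgeSet he
  rw [← hcard, herase, Finset.card_erase_add_one heG, SimpleGraph.edgeFinset_card]

end Walks

/-! ### Weighted degrees -/

section Incidence

variable {V : Type*} [DecidableEq V]

/-- The number of occurrences of each vertex in a list. -/
def vertexCount (l : List V) : V → ℤ := fun v => l.count v

lemma vertexCount_nil : vertexCount ([] : List V) = 0 := rfl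

lemma vertexCount_cons (a : V) (l : List V) :
    vertexCount (a :: l) = Pi.single a 1 + vertexCount l := by
  ext v
  obtain rfl | h := eq_or_ne v a
  · simp [vertexCount, add_comm]
  · simp [vertexCount, h, List.count_cons_of_ne h.symm]

lemma vertexCount_nonneg (l : List V) : 0 ≤ vertexCount l := fun _ => Int.natCast_nonneg _

variable [Fintype V]

lemma sum_vertexCount (l : List V) : ∑ v, vertexCount l v = l.length := by
  have h := Multiset.sum_count_eq_card (s := Finset.univ) (m := (l : Multiset V)) (by simp)
  simp only [Multiset.coe_card, Multiset.coe_count] at h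
  simp only [vertexCount]
  exact_mod_cast h

variable (G : SimpleGraph V) [DecidableRel G.Adj]

/-- The vertex degrees of `G` when every edge is counted with an integer weight. The incidence
matrix is restricted to the edges of `G` so that it is square for a unicyclic graph. -/
def weightedDegree : (G.edgeSet → ℤ) →ₗ[ℤ] (V → ℤ) :=
  ((G.incMatrix ℤ).submatrix id Subtype.val).mulVecLin

variable {G}

lemma weightedDegree_apply (f : G.edgeSet → ℤ) (v : V) :
    weightedDegree G f v = ∑ e : G.edgeSet, if v ∈ (e : Sym2 V) then f e else 0 := by
  simp [weightedDegree, Matrix.mulVec, dotProduct, SimpleGraph.incMatrix_apply',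
    SimpleGraph.incidenceSet]

lemma weightedDegree_single {a b : V} (h : G.Adj a b) (r : ℤ) :
    weightedDegree G (Pi.single ⟨s(a, b), h⟩ r) = Pi.single a r + Pi.single b r := by
  ext v
  have hne := h.ne
  rw [weightedDegree_apply, Finset.sum_eq_single ⟨s(a, b), h⟩ (by simp +contextual) (by simp)]
  by_cases hva : v = a <;> by_cases hvb : v = b <;> simp_all

lemma sum_weightedDegree (f : G.edgeSet → ℤ) : ∑ v, weightedDegree G f v = 2 * ∑ e, f e := by
  simp only [weightedDegree, Matrix.mulVecLin_apply, Matrix.mulVec, dotProduct,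
    Matrix.submatrix_apply, id_eq]
  rw [Finset.sum_comm, Finset.mul_sum]
  refine Finset.sum_congr rfl fun e _ => ?_
  rw [← Finset.sum_mul, G.sum_incMatrix_apply_of_mem_edgeSet e.2]

lemma weightedDegree_mono : Monotone (weightedDegree G) := by
  intro f g hfg v
  simp only [weightedDegree_apply]
  gcongr with e
  split_ifs
  exacts [hfg e, le_rfl]

lemma weightedDegree_nonneg {f : G.edgeSet → ℤ} (hf : 0 ≤ f) : 0 ≤ weightedDegree G f :=
  (map_zero (weightedDegree G)).symm.trans_le (weightedDegree_mono hf)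

lemma exists_adj_lt_of_weightedDegree_lt {f g : G.edgeSet → ℤ} {a : V}
    (h : weightedDegree G f a < weightedDegree G g a) :
    ∃ (b : V) (hab : G.Adj a b), f ⟨s(a, b), hab⟩ < g ⟨s(a, b), hab⟩ := by
  simp only [weightedDegree_apply] at h
  obtain ⟨⟨e, he⟩, -, hlt⟩ := Finset.exists_lt_of_sum_lt h
  split_ifs at hlt with hae
  · obtain ⟨b, rfl⟩ := Sym2.mem_iff_exists.mp hae
    exact ⟨b, he, hlt⟩
  · exact absurd hlt (lt_irrefl _)

lemma eq_zero_of_weightedDegree_eq_zero {f : G.edgeSet → ℤ} (hf : 0 ≤ f) {v : V}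
    (hv : weightedDegree G f v = 0) {e : G.edgeSet} (hve : v ∈ (e : Sym2 V)) : f e = 0 := by
  rw [weightedDegree_apply, Finset.sum_eq_zero_iff_of_nonneg] at hv
  · simpa [hve] using hv e (Finset.mem_univ e)
  · intro e _
    split_ifs
    exacts [hf e, le_rfl]

lemma weightedDegree_eq_of_existsUnique_adj (f : G.edgeSet → ℤ) {e : G.edgeSet} {v : V}
    (hve : v ∈ (e : Sym2 V)) (hv : ∃! w, G.Adj v w) : weightedDegree G f v = f e := by
  have hunique : ∀ e' : G.edgeSet, v ∈ (e' : Sym2 V) → e' = e := by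
    obtain ⟨e, he⟩ := e
    rintro ⟨e', he'⟩ hve'
    obtain ⟨w, rfl⟩ := Sym2.mem_iff_exists.mp hve
    obtain ⟨w', rfl⟩ := Sym2.mem_iff_exists.mp hve'
    obtain rfl : w = w' := hv.unique he he'
    rfl
  rw [weightedDegree_apply, Finset.sum_eq_single e, if_pos hve]
  · exact fun e' _ hne => if_neg fun hve' => hne (hunique e' hve')
  · simp

end Incidence

/-! ### Weights on odd closed walks and lassos -/

section Lassos

variable {V : Type*} [Fintype V] [DecidableEq V] {G : SimpleGraph V} [DecidableRel G.Adj]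
  {v : V} {c : G.Walk v v}

-- Weight every other edge of `p`, starting with its first edge or with its second edge.
lemma exists_alternating_weights {a b : V} (p : G.Walk a b) :
    (∃ y : G.edgeSet → ℤ, 0 ≤ y ∧ (∀ e : G.edgeSet, ↑e ∉ p.edges → y e = 0) ∧
      weightedDegree G y =
        vertexCount p.support - if Even p.length then Pi.single b 1 else 0) ∧
    ∃ y : G.edgeSet → ℤ, 0 ≤ y ∧ (∀ e : G.edgeSet, ↑e ∉ p.edges → y e = 0) ∧
      weightedDegree G y =
        vertexCount p.support.tail - if Even p.length then 0 else Pi.single b 1 := by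
  induction p with
  | nil =>
    constructor <;> refine ⟨0, le_rfl, fun _ _ => rfl, ?_⟩ <;>
      simp [vertexCount_cons, vertexCount_nil]
  | @cons a j b h q ih =>
    obtain ⟨⟨y, hy, hysupp, hyD⟩, z, hz, hzsupp, hzD⟩ := ih
    refine ⟨⟨Pi.single ⟨s(a, j), h⟩ 1 + z, add_nonneg (Pi.single_nonneg.2 zero_le_one) hz,
      ?_, ?_⟩, y, hy, ?_, ?_⟩
    · intro e he
      obtain ⟨hne, heq⟩ := notMem_edges_cons.mp he
      simp [hne, hzsupp e heq]
    · rw [map_add, weightedDegree_single, hzD, SimpleGraph.Walk.support_cons,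
        vertexCount_cons, ← q.cons_tail_support, vertexCount_cons, List.tail_cons]
      simp only [SimpleGraph.Walk.length_cons, Nat.even_add_one, ite_not]
      abel
    · exact fun e he => hysupp e fun h' => he (List.mem_cons_of_mem _ h')
    · rw [hyD]
      simp [Nat.even_add_one, -Nat.not_even_iff_odd]

lemma exists_weights_of_mem_odd_closed_walk {w : V} (hodd : Odd c.length)
    (hw : w ∈ c.support) (s : ℤˣ) :
    ∃ y : G.edgeSet → ℤ, 0 ≤ y ∧ (∀ e : G.edgeSet, ↑e ∉ c.edges → y e = 0) ∧
      weightedDegree G y = vertexCount c.support.tail + Pi.single w (s : ℤ) := by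
  have hodd' : ¬ Even (c.rotate w hw).length := by
    rwa [SimpleGraph.Walk.length_rotate, Nat.not_even_iff_odd]
  have hedges : ∀ e, e ∈ (c.rotate w hw).edges ↔ e ∈ c.edges := fun e =>
    (c.rotate_edges w hw).mem_iff
  have hcount : vertexCount (c.rotate w hw).support.tail = vertexCount c.support.tail := by
    ext v
    simp only [vertexCount]
    exact_mod_cast (c.support_rotate w hw).perm.count_eq v
  obtain ⟨⟨y, hy, hysupp, hyD⟩, z, hz, hzsupp, hzD⟩ := exists_alternating_weights (c.rotate w hw)
  simp only [hedges] at hysupp hzsupp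
  obtain rfl | rfl := Int.units_eq_one_or s
  · refine ⟨y, hy, hysupp, ?_⟩
    rw [hyD, if_neg hodd', sub_zero, ← SimpleGraph.Walk.cons_tail_support, vertexCount_cons, hcount,
      add_comm, Units.val_one]
  · refine ⟨z, hz, hzsupp, ?_⟩
    rw [hzD, if_neg hodd', hcount, sub_eq_add_neg, Units.val_neg, Units.val_one, Pi.single_neg]

-- Prepending an edge moves the unit to the new end of the path and changes its sign.
lemma exists_lasso_weights {w i : V} (hodd : Odd c.length)
    (hw : w ∈ c.support) {p : G.Walk i w} (hp : p.IsTrail) (hpc : p.edges.Disjoint c.edges)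
    (s : ℤˣ) :
    ∃ y : G.edgeSet → ℤ, (∀ e, -1 ≤ y e) ∧ (∀ e : G.edgeSet, ↑e ∉ p.edges → 0 ≤ y e) ∧
      (∀ e : G.edgeSet, ↑e ∉ p.edges → ↑e ∉ c.edges → y e = 0) ∧
      weightedDegree G y = vertexCount c.support.tail + Pi.single i (s : ℤ) := by
  induction p generalizing s with
  | nil =>
    obtain ⟨y, hy, hsupp, hD⟩ := exists_weights_of_mem_odd_closed_walk hodd hw s
    exact ⟨y, fun e => by linarith [show 0 ≤ y e from hy e], fun e _ => hy e,
      fun e _ => hsupp e, hD⟩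
  | @cons i j w h q ih =>
    rw [SimpleGraph.Walk.isTrail_cons] at hp
    rw [SimpleGraph.Walk.edges_cons, List.disjoint_cons_left] at hpc
    obtain ⟨y, hlow, hnonneg, hsupp, hD⟩ := ih hw hp.1 hpc.2 (-s)
    have hzero : y ⟨s(i, j), h⟩ = 0 := hsupp _ hp.2 hpc.1
    refine ⟨Pi.single ⟨s(i, j), h⟩ (s : ℤ) + y, fun e => ?_, fun e he => ?_, fun e he hec => ?_, ?_⟩
    · obtain rfl | hne := eq_or_ne e ⟨s(i, j), h⟩
      · obtain rfl | rfl := Int.units_eq_one_or s <;> simp [hzero]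
      · simpa [hne] using hlow e
    · obtain ⟨hne, heq⟩ := notMem_edges_cons.mp he
      simpa [hne] using hnonneg e heq
    · obtain ⟨hne, heq⟩ := notMem_edges_cons.mp he
      simpa [hne] using hsupp e heq hec
    · rw [map_add, weightedDegree_single, hD, Units.val_neg, Pi.single_neg]
      abel

lemma exists_weights_add_single (hconn : G.Connected) (hodd : Odd c.length) (i : V) (s : ℤˣ) :
    ∃ y : G.edgeSet → ℤ,
      weightedDegree G y = vertexCount c.support.tail + Pi.single i (s : ℤ) := by
  obtain ⟨p⟩ := hconn i v
  obtain ⟨w, hw, q, hq, -, hqc⟩ := exists_trail_disjoint_edges p c.start_mem_support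
  obtain ⟨y, -, -, -, hy⟩ := exists_lasso_weights hodd hw hq hqc s
  exact ⟨y, hy⟩

lemma single_add_single_mem_range_weightedDegree (hconn : G.Connected) (hodd : Odd c.length)
    (i j : V) : Pi.single i 1 + Pi.single j 1 ∈ LinearMap.range (weightedDegree G) := by
  obtain ⟨y, hy⟩ := exists_weights_add_single hconn hodd i 1
  obtain ⟨z, hz⟩ := exists_weights_add_single hconn hodd j (-1)
  refine ⟨y - z, ?_⟩
  rw [map_sub, hy, hz, Units.val_neg, Pi.single_neg, Units.val_one]
  abel

lemma weightedDegree_injective (hconn : G.Connected) (hodd : Odd c.length) (hc : c.IsCycle)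
    (huniq : ∀ (w : V) (p : G.Walk w w), p.IsCycle → ∀ e, e ∈ p.edges ↔ e ∈ c.edges) :
    Function.Injective (weightedDegree G) := by
  refine injective_of_single_mem_range _ (card_edgeSet_of_unique_cycle hconn hc huniq).le
    (two_ne_zero : (2 : ℤ) ≠ 0) fun i => ?_
  rw [← one_add_one_eq_two, Pi.single_add]
  exact single_add_single_mem_range_weightedDegree hconn hodd i i

end Lassos

/-! ### Matchings and critical capacities -/

section BMatching

variable {V : Type*} [Fintype V] [DecidableEq V] {G : SimpleGraph V} [DecidableRel G.Adj]
  {b : V → ℤ} {f g : G.edgeSet → ℤ} {t : ℕ}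

/-- A `b`-matching: a multiset of edges, given by its multiplicities, in which each vertex `v` has
degree at most `b v`. -/
structure IsBMatching (b : V → ℤ) (f : G.edgeSet → ℤ) : Prop where
  nonneg : 0 ≤ f
  degree_le : weightedDegree G f ≤ b

variable (G) in
/-- There is a `b`-matching of `G` with `t` edges, counted with multiplicity. -/
def HasBMatching (b : V → ℤ) (t : ℕ) : Prop :=
  ∃ f : G.edgeSet → ℤ, IsBMatching b f ∧ ∑ e, f e = t

lemma IsBMatching.add_single (hf : IsBMatching b f) {x y : V} (h : G.Adj x y)
    (hx : weightedDegree G f x < b x) (hy : weightedDegree G f y < b y) :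
    IsBMatching b (f + Pi.single ⟨s(x, y), h⟩ 1) := by
  refine ⟨add_nonneg hf.nonneg (Pi.single_nonneg.2 zero_le_one), fun v => ?_⟩
  have hv := hf.degree_le v
  have hne := h.ne
  simp only [map_add, weightedDegree_single, Pi.add_apply, Pi.single_apply]
  grind

lemma IsBMatching.add_single_sub_single (hf : IsBMatching b f) {x y z : V} (hxy : G.Adj x y)
    (hyz : G.Adj y z) (hx : weightedDegree G f x < b x) (hpos : 0 < f ⟨s(y, z), hyz⟩) :
    IsBMatching b (f + Pi.single ⟨s(x, y), hxy⟩ 1 - Pi.single ⟨s(y, z), hyz⟩ 1) := by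
  refine ⟨fun e => ?_, fun v => ?_⟩
  · have he : 0 ≤ f e := hf.nonneg e
    simp only [Pi.zero_apply, Pi.sub_apply, Pi.add_apply, Pi.single_apply]
    grind
  · have hv := hf.degree_le v
    simp only [map_sub, map_add, weightedDegree_single, Pi.sub_apply, Pi.add_apply,
      Pi.single_apply]
    grind

lemma IsBMatching.sub_single (hf : IsBMatching b f) {e : G.edgeSet} (hpos : 0 < f e) :
    IsBMatching b (f - Pi.single e 1) := by
  have hle : f - Pi.single e 1 ≤ f := sub_le_self _ (Pi.single_nonneg.2 zero_le_one)
  refine ⟨fun e' => ?_, (weightedDegree_mono hle).trans hf.degree_le⟩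
  have he' : 0 ≤ f e' := hf.nonneg e'
  simp only [Pi.zero_apply, Pi.sub_apply, Pi.single_apply]
  grind

lemma HasBMatching.of_succ (h : HasBMatching G b (t + 1)) : HasBMatching G b t := by
  obtain ⟨f, hf, hsum⟩ := h
  obtain ⟨e, -, he⟩ : ∃ e ∈ Finset.univ, (0 : ℤ) < f e :=
    Finset.exists_lt_of_sum_lt (by rw [hsum, Finset.sum_const_zero]; positivity)
  refine ⟨f - Pi.single e 1, hf.sub_single he, ?_⟩
  simp [Finset.sum_sub_distrib, hsum]

lemma HasBMatching.of_succ_add_single {w : V} (hw : 0 ≤ b w)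
    (h : HasBMatching G (b + Pi.single w 1) (t + 1)) : HasBMatching G b t := by
  obtain ⟨f, hf, hsum⟩ := h
  obtain hle | hlt := le_or_gt (weightedDegree G f w) (b w)
  · refine HasBMatching.of_succ ⟨f, ⟨hf.nonneg, fun v => ?_⟩, hsum⟩
    have hv := hf.degree_le v
    simp only [Pi.add_apply, Pi.single_apply] at hv
    grind
  · obtain ⟨x, hwx, hpos⟩ := exists_adj_lt_of_weightedDegree_lt (f := 0) (g := f) (a := w)
      (by simpa using hw.trans_lt hlt)
    refine ⟨f - Pi.single ⟨s(w, x), hwx⟩ 1, ⟨(hf.sub_single hpos).nonneg, fun v => ?_⟩, ?_⟩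
    · have hv := hf.degree_le v
      simp only [map_sub, weightedDegree_single, Pi.sub_apply, Pi.add_apply,
        Pi.single_apply] at hv ⊢
      grind
    · simp [Finset.sum_sub_distrib, hsum]

lemma exists_adj_lt_of_weightedDegree_le {x y : V}
    (hle : weightedDegree G g y ≤ weightedDegree G f y) (hxy : G.Adj x y)
    (hlt : f ⟨s(x, y), hxy⟩ < g ⟨s(x, y), hxy⟩) :
    ∃ (z : V) (hyz : G.Adj y z), g ⟨s(y, z), hyz⟩ < f ⟨s(y, z), hyz⟩ := by
  obtain ⟨z, hyz, hz⟩ := exists_adj_lt_of_weightedDegree_lt (f := g)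
    (g := f + Pi.single ⟨s(x, y), hxy⟩ 1) (a := y)
    (by simpa [weightedDegree_single, hxy.ne'] using Int.lt_add_one_of_le hle)
  refine ⟨z, hyz, ?_⟩
  simp only [Pi.add_apply, Pi.single_apply] at hz
  split_ifs at hz with heq
  · rw [heq] at hz
    omega
  · simpa using hz

-- Take `f'` with `t` edges and as close to `g` as possible: where `f'` has smaller degree than `g`,
-- swapping two consecutive edges would bring it closer.
lemma IsBMatching.exists_degree_le (hf : IsBMatching b f) (hsum : ∑ e, f e = t)
    (hmax : ¬ HasBMatching G b (t + 1)) (hg : IsBMatching b g) :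
    ∃ f', IsBMatching b f' ∧ ∑ e, f' e = t ∧ weightedDegree G g ≤ weightedDegree G f' := by
  obtain ⟨f', hmin⟩ := exists_minimalFor_of_wellFoundedLT
    (fun f' : G.edgeSet → ℤ => IsBMatching b f' ∧ ∑ e, f' e = t)
    (fun f' => ∑ e, (g e - f' e).toNat) ⟨f, hf, hsum⟩
  obtain ⟨hf', hsum'⟩ := hmin.prop
  refine ⟨f', hf', hsum', fun x => ?_⟩
  by_contra! hx
  have hxb := hx.trans_le (hg.degree_le x)
  obtain ⟨y, hxy, hlt⟩ := exists_adj_lt_of_weightedDegree_lt hx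
  have hy : b y ≤ weightedDegree G f' y := by
    by_contra! hy
    exact hmax ⟨_, hf'.add_single hxy hxb hy, by simp [Finset.sum_add_distrib, hsum']⟩
  obtain ⟨z, hyz, hgt⟩ :=
    exists_adj_lt_of_weightedDegree_le ((hg.degree_le y).trans hy) hxy hlt
  have hpos : 0 < f' ⟨s(y, z), hyz⟩ := (hg.nonneg _).trans_lt hgt
  refine hmin.not_lt (j := f' + Pi.single ⟨s(x, y), hxy⟩ 1 - Pi.single ⟨s(y, z), hyz⟩ 1)
    ⟨hf'.add_single_sub_single hxy hyz hxb hpos, ?_⟩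
    (Finset.sum_lt_sum (fun e _ => ?_) ⟨⟨s(x, y), hxy⟩, Finset.mem_univ _, ?_⟩)
  · simp [Finset.sum_add_distrib, Finset.sum_sub_distrib, hsum']
  all_goals
    simp only [Pi.sub_apply, Pi.add_apply, Pi.single_apply]
    grind

end BMatching

section Critical

variable {V : Type*} [Fintype V] [DecidableEq V] {G : SimpleGraph V} [DecidableRel G.Adj]
  {b : V → ℤ} {f g : G.edgeSet → ℤ} {m t : ℕ}

variable (G) in
/-- There is no `b`-matching with `m` edges, but there is one as soon as the capacity of any one
vertex is increased by one. This is the combinatorial form of the socle condition. -/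
def IsCritical (b : V → ℤ) (m : ℕ) : Prop :=
  ¬ HasBMatching G b m ∧ ∀ i, HasBMatching G (b + Pi.single i 1) m

variable (G) in
/-- Increasing the capacity of any one vertex by one makes `b` the degree vector of a multiset of
edges. This is an analogue of factor-critical graphs, with a vertex doubled rather than deleted. -/
def IsFactorCritical (b : V → ℤ) : Prop :=
  ∀ i, ∃ f : G.edgeSet → ℤ, 0 ≤ f ∧ weightedDegree G f = b + Pi.single i 1

lemma IsBMatching.mono {b' : V → ℤ} (hf : IsBMatching b f) (hb : b ≤ b') : IsBMatching b' f :=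
  ⟨hf.nonneg, hf.degree_le.trans hb⟩

lemma IsBMatching.two_mul_sum_le (hf : IsBMatching b f) : 2 * ∑ e, f e ≤ ∑ v, b v :=
  (sum_weightedDegree f).symm.trans_le (Finset.sum_le_sum fun v _ => hf.degree_le v)

lemma IsBMatching.weightedDegree_eq (hf : IsBMatching b f) (hsum : ∑ v, b v ≤ 2 * ∑ e, f e) :
    weightedDegree G f = b := by
  rw [← sum_weightedDegree f] at hsum
  have hle : ∀ v ∈ Finset.univ, weightedDegree G f v ≤ b v := fun v _ => hf.degree_le v
  ext v
  exact (Finset.sum_eq_sum_iff_of_le hle).mp (le_antisymm (Finset.sum_le_sum hle) hsum) v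
    (Finset.mem_univ v)

lemma IsCritical.weightedDegree_add_one_eq (hcrit : IsCritical G b (t + 1)) (hf : IsBMatching b f)
    (hsum : ∑ e, f e = t) {u : V} (hu : weightedDegree G f u < b u) :
    weightedDegree G f u + 1 = b u ∧
      ∃ g : G.edgeSet → ℤ, 0 ≤ g ∧ weightedDegree G g = weightedDegree G f + Pi.single u 2 := by
  have hb : b ≤ b + Pi.single u 1 := le_add_of_nonneg_right (Pi.single_nonneg.2 zero_le_one)
  have hbu : 0 ≤ b u := (weightedDegree_nonneg hf.nonneg u).trans hu.le
  have hmax : ¬ HasBMatching G (b + Pi.single u 1) (t + 1 + 1) := fun h =>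
    hcrit.1 (h.of_succ_add_single hbu)
  obtain ⟨g₀, hg₀, hsum₀⟩ := hcrit.2 u
  obtain ⟨g, hg, hgsum, hfg⟩ := hg₀.exists_degree_le hsum₀ hmax (hf.mono hb)
  have hgu : b u < weightedDegree G g u := by
    by_contra! hgu
    refine hcrit.1 ⟨g, ⟨hg.nonneg, fun v => ?_⟩, hgsum⟩
    have hv := hg.degree_le v
    simp only [Pi.add_apply, Pi.single_apply] at hv
    grind
  have hdiff : ∑ v, (weightedDegree G g - weightedDegree G f) v = 2 := by
    simp only [Pi.sub_apply, Finset.sum_sub_distrib, sum_weightedDegree, hgsum, hsum]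
    push_cast
    ring
  have hsingle := eq_single_of_sum_le (sub_nonneg.2 hfg) (i := u)
    (by rw [hdiff, Pi.sub_apply]; omega)
  have htwo : weightedDegree G g u - weightedDegree G f u = 2 := by
    rw [hsingle] at hdiff
    simpa using hdiff
  refine ⟨by omega, g, hg.nonneg, ?_⟩
  rw [Pi.sub_apply, htwo] at hsingle
  exact eq_add_of_sub_eq' hsingle

lemma IsCritical.unique_unsaturated (hinj : Function.Injective (weightedDegree G))
    (hrange : ∀ i j : V, Pi.single i 1 + Pi.single j 1 ∈ LinearMap.range (weightedDegree G))
    (hcrit : IsCritical G b (t + 1)) (hf : IsBMatching b f) (hsum : ∑ e, f e = t) {u w : V}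
    (hu : weightedDegree G f u < b u) (hw : weightedDegree G f w < b w) : u = w := by
  by_contra hne
  obtain ⟨-, g, hg, hgD⟩ := hcrit.weightedDegree_add_one_eq hf hsum hu
  obtain ⟨-, h, hh, hhD⟩ := hcrit.weightedDegree_add_one_eq hf hsum hw
  obtain ⟨y, hy⟩ := hrange u w
  have htwice : g + h = 2 • (f + y) := hinj <| by
    rw [map_nsmul, map_add, map_add, hgD, hhD, hy, ← one_add_one_eq_two (R := ℤ), Pi.single_add,
      Pi.single_add]
    abel
  refine hcrit.1 ⟨f + y, ⟨fun e => ?_, fun v => ?_⟩, ?_⟩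
  · have he := congrFun htwice e
    have hge : 0 ≤ g e := hg e
    have hhe : 0 ≤ h e := hh e
    simp only [Pi.add_apply, Pi.smul_apply, nsmul_eq_mul] at he
    simp only [Pi.zero_apply, Pi.add_apply]
    grind
  · have hv := hf.degree_le v
    simp only [map_add, hy, Pi.add_apply, Pi.single_apply]
    grind
  · have hysum := sum_weightedDegree y
    simp only [hy, Pi.add_apply, Finset.sum_add_distrib, Finset.sum_pi_single',
      Finset.mem_univ, if_true] at hysum
    simp only [Pi.add_apply, Finset.sum_add_distrib, hsum]
    push_cast
    linarith

lemma IsCritical.sum_add_one_eq [Nonempty V] (hinj : Function.Injective (weightedDegree G))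
    (hrange : ∀ i j : V, Pi.single i 1 + Pi.single j 1 ∈ LinearMap.range (weightedDegree G))
    (hb : 0 ≤ b) (hcrit : IsCritical G b m) : ∑ v, b v + 1 = 2 * (m : ℤ) := by
  obtain _ | t := m
  · exact absurd ⟨0, ⟨le_rfl, by simpa using hb⟩, by simp⟩ hcrit.1
  obtain ⟨i⟩ := ‹Nonempty V›
  obtain ⟨f, hf, hsum⟩ := (hcrit.2 i).of_succ_add_single (hb i)
  obtain ⟨g, hg, hgsum⟩ := hcrit.2 i
  have hlower : 2 * ((t + 1 : ℕ) : ℤ) ≤ ∑ v, b v + 1 := by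
    simpa [hgsum, Finset.sum_add_distrib] using hg.two_mul_sum_le
  have hdeg := sum_weightedDegree f
  obtain ⟨u, -, hu⟩ : ∃ u ∈ Finset.univ, weightedDegree G f u < b u :=
    Finset.exists_lt_of_sum_lt (by push_cast at hlower; omega)
  have hupper : ∑ v, (b v - weightedDegree G f v) = b u - weightedDegree G f u := by
    refine Finset.sum_eq_single u (fun w _ hwu => sub_eq_zero.2 ?_) (by simp)
    refine le_antisymm (not_lt.1 fun hw => hwu ?_) (hf.degree_le w)
    exact hcrit.unique_unsaturated hinj hrange hf hsum hw hu
  have hu_eq := (hcrit.weightedDegree_add_one_eq hf hsum hu).1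
  rw [Finset.sum_sub_distrib] at hupper
  push_cast
  omega

lemma isCritical_iff_isFactorCritical [Nonempty V] (hinj : Function.Injective (weightedDegree G))
    (hrange : ∀ i j : V, Pi.single i 1 + Pi.single j 1 ∈ LinearMap.range (weightedDegree G))
    (hb : 0 ≤ b) : IsCritical G b m ↔ IsFactorCritical G b ∧ ∑ v, b v + 1 = 2 * (m : ℤ) := by
  have hsum_add : ∀ i, ∑ v, (b + Pi.single i 1 : V → ℤ) v = ∑ v, b v + 1 := fun i => by
    simp [Finset.sum_add_distrib]
  constructor
  · intro hcrit
    have hsum := hcrit.sum_add_one_eq hinj hrange hb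
    refine ⟨fun i => ?_, hsum⟩
    obtain ⟨f, hf, hfsum⟩ := hcrit.2 i
    exact ⟨f, hf.nonneg, hf.weightedDegree_eq (by rw [hsum_add, hsum, hfsum])⟩
  · rintro ⟨hfc, hsum⟩
    refine ⟨fun ⟨f, hf, hfsum⟩ => ?_, fun i => ?_⟩
    · have := hf.two_mul_sum_le
      omega
    · obtain ⟨f, hf, hfD⟩ := hfc i
      refine ⟨f, ⟨hf, hfD.le⟩, ?_⟩
      have hf2 := sum_weightedDegree f
      rw [hfD, hsum_add] at hf2
      omega

end Critical

/-! ### Odd unicyclic graphs -/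

section Unicyclic

variable {V : Type*} {G : SimpleGraph V} {v : V} {c : G.Walk v v}

/-- For a unicyclic graph `G` with cycle `c`, the set `E*(G)` of the edges that are neither on the
cycle nor leaves. -/
def innerEdges (c : G.Walk v v) : Set (Sym2 V) :=
  {e | e ∈ G.edgeSet ∧ e ∉ c.edges ∧ ¬ ∃ x ∈ e, ∃! y, G.Adj x y}

variable [DecidableEq V]

lemma vertexCount_tail_support_of_mem (hc : c.IsCycle) {x : V} (hx : x ∈ c.support) :
    vertexCount c.support.tail x = 1 := by
  have hx_tail : x ∈ c.support.tail := by
    obtain rfl | hx := (c.mem_support_iff).mp hx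
    exacts [c.end_mem_tail_support hc.not_nil, hx]
  simp only [vertexCount, List.count_eq_one_of_mem hc.support_nodup hx_tail, Nat.cast_one]

variable [Fintype V] [DecidableRel G.Adj] {f y : G.edgeSet → ℤ} {b : V → ℤ}

lemma IsFactorCritical.nonneg_add (hinj : Function.Injective (weightedDegree G))
    (hfc : IsFactorCritical G (b + weightedDegree G f)) {i : V}
    (hy : weightedDegree G y = b + Pi.single i 1) : 0 ≤ f + y := by
  obtain ⟨g, hg, hgD⟩ := hfc i
  have heq : g = f + y := hinj (by rw [hgD, map_add, hy]; abel)
  exact hg.trans_eq heq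

lemma IsFactorCritical.nonneg_add_apply (hinj : Function.Injective (weightedDegree G))
    (hfc : IsFactorCritical G (b + weightedDegree G f)) {a j w : V} (haj : G.Adj a j)
    (hjw : G.Adj j w) (hwa : w ≠ a) (hy : weightedDegree G y = b - Pi.single j 1) :
    0 ≤ f ⟨s(a, j), haj⟩ + y ⟨s(a, j), haj⟩ := by
  have hshift : weightedDegree G (y + Pi.single ⟨s(j, w), hjw⟩ 1) = b + Pi.single w 1 := by
    rw [map_add, weightedDegree_single, hy]
    abel
  have hne : (⟨s(a, j), haj⟩ : G.edgeSet) ≠ ⟨s(j, w), hjw⟩ := by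
    rw [Ne, Subtype.ext_iff]
    simp [haj.ne, hwa.symm]
  simpa [hne] using hfc.nonneg_add hinj hshift ⟨s(a, j), haj⟩

lemma IsFactorCritical.weights_nonneg (hinj : Function.Injective (weightedDegree G))
    (hc : c.IsCycle) (hodd : Odd c.length)
    (hfc : IsFactorCritical G (vertexCount c.support.tail + weightedDegree G f)) : 0 ≤ f := by
  rintro ⟨⟨a, j⟩, haj⟩
  by_cases he : s(a, j) ∈ c.edges
  · have hj : j ∈ c.support := c.snd_mem_support_of_mem_edges he
    obtain ⟨z, hz, -, hzD⟩ := exists_weights_of_mem_odd_closed_walk hodd hj (-1)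
    have hze : z ⟨s(a, j), haj⟩ = 0 :=
      eq_zero_of_weightedDegree_eq_zero hz (v := j)
        (by simp [hzD, vertexCount_tail_support_of_mem hc hj]) (Sym2.mem_mk_right a j)
    obtain ⟨w, hwa, hjw⟩ := exists_ne_adj_of_mem_cycle hc hj a
    have hnonneg := hfc.nonneg_add_apply hinj haj hjw hwa
      (by rw [hzD, Units.val_neg, Units.val_one, Pi.single_neg, sub_eq_add_neg])
    rwa [hze, add_zero] at hnonneg
  · obtain ⟨y, -, hsupp, hyD⟩ :=
      exists_weights_of_mem_odd_closed_walk hodd c.start_mem_support 1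
    have hnonneg := hfc.nonneg_add hinj hyD ⟨s(a, j), haj⟩
    rwa [Pi.add_apply, hsupp ⟨s(a, j), haj⟩ he, add_zero] at hnonneg

lemma IsFactorCritical.one_le_of_mem_innerEdges (hinj : Function.Injective (weightedDegree G))
    (hconn : G.Connected) (hodd : Odd c.length)
    (hfc : IsFactorCritical G (vertexCount c.support.tail + weightedDegree G f)) {e : G.edgeSet}
    (he : ↑e ∈ innerEdges c) : 1 ≤ f e := by
  obtain ⟨e, heG⟩ := e
  obtain ⟨-, hec, hleaf⟩ := he
  obtain ⟨x, hxe, p, hp⟩ := exists_walk_notMem_edges hconn e v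
  obtain ⟨j, rfl⟩ := Sym2.mem_iff_exists.mp hxe
  obtain ⟨x', hx', q, hq, hqp, hqc⟩ := exists_trail_disjoint_edges p c.start_mem_support
  obtain ⟨y, -, -, hsupp, hyD⟩ := exists_lasso_weights hodd hx' hq hqc 1
  have hye : y ⟨s(x, j), heG⟩ = 0 := hsupp _ (fun h => hp (hqp h)) hec
  have hzD : weightedDegree G (y - Pi.single ⟨s(x, j), heG⟩ 1) =
      vertexCount c.support.tail - Pi.single j 1 := by
    rw [map_sub, weightedDegree_single heG, hyD, Units.val_one]
    abel
  obtain ⟨w, hjw, hwx⟩ : ∃ w, G.Adj j w ∧ w ≠ x := by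
    by_contra! hj
    exact hleaf ⟨j, Sym2.mem_mk_right x j, x, G.adj_symm heG, hj⟩
  have hnonneg := hfc.nonneg_add_apply hinj heG hjw hwx hzD
  simp only [Pi.sub_apply, Pi.single_eq_same, hye] at hnonneg
  linarith

lemma isFactorCritical_of_one_le (hconn : G.Connected) (hodd : Odd c.length) (hf : 0 ≤ f)
    (hinner : ∀ e : G.edgeSet, ↑e ∈ innerEdges c → 1 ≤ f e) :
    IsFactorCritical G (vertexCount c.support.tail + weightedDegree G f) := by
  intro i
  obtain ⟨p⟩ := hconn i v
  obtain ⟨w, hw, q, hq, -, hqc⟩ := exists_trail_disjoint_edges p c.start_mem_support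
  obtain ⟨y, hlow, hoff, -, hyD⟩ := exists_lasso_weights hodd hw hq hqc 1
  refine ⟨f + y, fun e => ?_, by rw [map_add, hyD, Units.val_one]; abel⟩
  have hfe : 0 ≤ f e := hf e
  have hylow := hlow e
  change 0 ≤ f e + y e
  by_cases heq : ↑e ∈ q.edges
  · by_cases hleaf : ∃ x ∈ (e : Sym2 V), ∃! y, G.Adj x y
    · obtain ⟨x, hxe, hx⟩ := hleaf
      have hdeg : 0 ≤ weightedDegree G y := by
        rw [hyD]
        exact add_nonneg (vertexCount_nonneg _) (Pi.single_nonneg.2 zero_le_one)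
      have hye : 0 ≤ y e := by
        rw [← weightedDegree_eq_of_existsUnique_adj y hxe hx]
        exact hdeg x
      omega
    · have := hinner e ⟨e.2, hqc heq, hleaf⟩
      omega
  · have := hoff e heq
    omega

lemma sum_vertexCount_add_weightedDegree {k : ℕ} (hlen : c.length = 2 * k + 1) :
    ∑ x, (vertexCount c.support.tail + weightedDegree G f) x = 2 * (∑ e, f e + k) + 1 := by
  simp only [Pi.add_apply, Finset.sum_add_distrib, sum_vertexCount, sum_weightedDegree,
    List.length_tail, SimpleGraph.Walk.length_support, hlen]
  push_cast
  ring

lemma isCritical_iff_exists_weights (hinj : Function.Injective (weightedDegree G))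
    (hconn : G.Connected) (hc : c.IsCycle) {k m : ℕ} (hlen : c.length = 2 * k + 1) (hb : 0 ≤ b) :
    IsCritical G b m ↔ ∃ f : G.edgeSet → ℤ, 0 ≤ f ∧
      (∀ e : G.edgeSet, ↑e ∈ innerEdges c → 1 ≤ f e) ∧
      ∑ e, f e + (k + 1) = m ∧ b = vertexCount c.support.tail + weightedDegree G f := by
  have hodd : Odd c.length := ⟨k, hlen⟩
  have : Nonempty V := hconn.nonempty
  rw [isCritical_iff_isFactorCritical hinj
    (single_add_single_mem_range_weightedDegree hconn hodd) hb]
  constructor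
  · rintro ⟨hfc, hsum⟩
    obtain ⟨g, -, hgD⟩ := hfc v
    obtain ⟨y, hyD⟩ := exists_weights_add_single hconn hodd v 1
    obtain rfl : b = vertexCount c.support.tail + weightedDegree G (g - y) := by
      rw [map_sub, hgD, hyD, Units.val_one]
      abel
    rw [sum_vertexCount_add_weightedDegree hlen] at hsum
    exact ⟨g - y, hfc.weights_nonneg hinj hc hodd,
      fun e he => hfc.one_le_of_mem_innerEdges hinj hconn hodd he, by linarith, rfl⟩
  · rintro ⟨f, hf, hinner, hsum, rfl⟩
    refine ⟨isFactorCritical_of_one_le hconn hodd hf hinner, ?_⟩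
    rw [sum_vertexCount_add_weightedDegree hlen]
    linarith

end Unicyclic

/-! ### Edge ideals -/

section EdgeIdeal

variable {V : Type*} (R : Type*) [CommSemiring R]

/-- The exponent vector of the monomial `X i * X j` attached to an edge `s(i, j)`. -/
noncomputable def edgeMultidegree : Sym2 V → V →₀ ℕ :=
  Sym2.lift ⟨fun i j => Finsupp.single i 1 + Finsupp.single j 1, fun _ _ => add_comm _ _⟩

/-- The monomial `X i * X j` attached to an edge `s(i, j)`, over any coefficient semiring. -/
noncomputable def edgeMonomial : Sym2 V → MvPolynomial V R :=
  Sym2.lift ⟨fun i j => X i * X j, fun _ _ => mul_comm _ _⟩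

/-- The edge ideal `I(G)` of a graph. -/
noncomputable def edgeIdeal (G : SimpleGraph V) : Ideal (MvPolynomial V R) :=
  Ideal.span {f | ∃ i j, G.Adj i j ∧ f = X i * X j}

lemma monomial_edgeMultidegree (e : Sym2 V) :
    monomial (edgeMultidegree e) (1 : R) = edgeMonomial R e := by
  induction e with
  | _ i j => simp [edgeMultidegree, edgeMonomial, X, monomial_mul]

lemma monomial_sum_smul_edgeMultidegree {ι : Type*} (s : Finset ι) (f : ι → ℕ) (φ : ι → Sym2 V) :
    monomial (∑ e ∈ s, f e • edgeMultidegree (φ e)) (1 : R) =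
      ∏ e ∈ s, edgeMonomial R (φ e) ^ f e := by
  simp only [monomial_sum_one, ← monomial_edgeMultidegree, monomial_pow, one_pow]

lemma edgeIdeal_eq_span_range (G : SimpleGraph V) :
    edgeIdeal R G = Ideal.span (Set.range fun e : G.edgeSet => edgeMonomial R e) := by
  refine congrArg Ideal.span (Set.ext fun f => ⟨?_, ?_⟩)
  · rintro ⟨i, j, hij, rfl⟩
    exact ⟨⟨s(i, j), hij⟩, rfl⟩
  · rintro ⟨⟨⟨i, j⟩, hij⟩, rfl⟩
    exact ⟨i, j, hij, rfl⟩

lemma prod_map_X [DecidableEq V] (l : List V) :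
    (l.map X).prod = monomial (Multiset.toFinsupp (l : Multiset V)) (1 : R) := by
  induction l with
  | nil => simp
  | cons a l ih =>
    rw [List.map_cons, List.prod_cons, ih, X, monomial_mul, one_mul, ← Multiset.cons_coe,
      ← Multiset.singleton_add, map_add, Multiset.toFinsupp_singleton]

variable {R} {G : SimpleGraph V} [Fintype G.edgeSet] {d : V →₀ ℕ} {m : ℕ}

lemma edgeIdeal_pow_eq_span : edgeIdeal R G ^ m = Ideal.span ((fun d => monomial d 1) ''
    {d | ∃ f : G.edgeSet → ℕ, ∑ e, f e = m ∧ ∑ e, f e • edgeMultidegree e.1 = d}) := by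
  rw [edgeIdeal_eq_span_range, Ideal.span, Submodule.span_pow, ← Set.image_univ,
    Finsupp.image_pow_eq_finsuppProd_image]
  refine congrArg Ideal.span (Set.ext fun p => ⟨?_, ?_⟩)
  · rintro ⟨f, ⟨hf, -⟩, rfl⟩
    refine ⟨_, ⟨f, by rw [← hf, Finsupp.degree_eq_sum], rfl⟩, ?_⟩
    simp only [monomial_sum_smul_edgeMultidegree]
    exact (Finsupp.prod_fintype _ _ fun _ => pow_zero _).symm
  · rintro ⟨_, ⟨f, hf, rfl⟩, rfl⟩
    refine ⟨Finsupp.equivFunOnFinite.symm f, ⟨by simpa [Finsupp.degree_eq_sum], by simp⟩, ?_⟩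
    simp only [monomial_sum_smul_edgeMultidegree]
    exact Finsupp.prod_fintype _ _ fun _ => pow_zero _

lemma monomial_mem_edgeIdeal_pow_iff [Nontrivial R] : monomial d (1 : R) ∈ edgeIdeal R G ^ m ↔
    ∃ f : G.edgeSet → ℕ, ∑ e, f e = m ∧ ∑ e, f e • edgeMultidegree e.1 ≤ d := by
  classical
  rw [edgeIdeal_pow_eq_span, mem_ideal_span_monomial_image, support_monomial, if_neg one_ne_zero]
  simp

end EdgeIdeal

section Socle

variable {V : Type*} [Fintype V] [DecidableEq V] {G : SimpleGraph V} [DecidableRel G.Adj]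
  {R : Type*} [CommSemiring R] [Nontrivial R] {d : V →₀ ℕ} {m : ℕ}

lemma coe_sum_smul_edgeMultidegree (f : G.edgeSet → ℕ) (v : V) :
    ((∑ e, f e • edgeMultidegree e.1) v : ℤ) = weightedDegree G (fun e => f e) v := by
  rw [weightedDegree_apply, Finsupp.finsetSum_apply, Nat.cast_sum]
  refine Finset.sum_congr rfl fun ⟨e, he⟩ _ => ?_
  induction e with
  | _ i j =>
    have hij : i ≠ j := G.ne_of_adj he
    by_cases hi : v = i <;> by_cases hj : v = j <;>
      simp_all [edgeMultidegree, eq_comm]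

lemma monomial_mem_edgeIdeal_pow_iff_hasBMatching :
    monomial d (1 : R) ∈ edgeIdeal R G ^ m ↔ HasBMatching G (fun v => (d v : ℤ)) m := by
  rw [monomial_mem_edgeIdeal_pow_iff]
  constructor
  · rintro ⟨f, hsum, hle⟩
    refine ⟨fun e => f e, ⟨fun _ => Int.natCast_nonneg _, fun v => ?_⟩, by simp [← hsum]⟩
    rw [← coe_sum_smul_edgeMultidegree]
    exact Nat.cast_le.2 (hle v)
  · rintro ⟨f, ⟨hf, hle⟩, hsum⟩
    lift f to G.edgeSet → ℕ using hf
    refine ⟨f, Nat.cast_injective ((Nat.cast_sum _ _).trans hsum), fun v => ?_⟩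
    exact Int.ofNat_le.1 ((coe_sum_smul_edgeMultidegree f v).trans_le (hle v))

lemma monomial_mem_colon_and_notMem_iff_isCritical :
    monomial d (1 : R) ∈ (edgeIdeal R G ^ m).colon (idealOfVars V R) ∧
        monomial d (1 : R) ∉ edgeIdeal R G ^ m ↔
      IsCritical G (fun v => (d v : ℤ)) m := by
  have hX : ∀ i, monomial d (1 : R) * X i = monomial (d + Finsupp.single i 1) 1 := fun i => by
    rw [X, monomial_mul, one_mul]
  have hcast : ∀ i, (fun v => ((d + Finsupp.single i 1 : V →₀ ℕ) v : ℤ)) =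
      (fun v => (d v : ℤ)) + Pi.single i 1 := fun i => by
    ext v
    simp [Finsupp.single_apply, Pi.single_apply, eq_comm]
  simp only [IsCritical, idealOfVars, Ideal.colon_span, Submodule.mem_colon, Set.forall_mem_range,
    smul_eq_mul, hX, monomial_mem_edgeIdeal_pow_iff_hasBMatching, hcast]
  rw [and_comm]

lemma coe_eq_vertexCount_add_weightedDegree_iff (l : List V) (f : G.edgeSet → ℕ) :
    (fun v => (d v : ℤ)) = vertexCount l + weightedDegree G (fun e => f e) ↔
      monomial d (1 : R) =
        (l.map X).prod * monomial (∑ e, f e • edgeMultidegree e.1) 1 := by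
  rw [prod_map_X, monomial_mul, one_mul, monomial_left_inj one_ne_zero, funext_iff,
    Finsupp.ext_iff]
  refine forall_congr' fun v => ?_
  rw [Pi.add_apply, ← coe_sum_smul_edgeMultidegree, Finsupp.add_apply, Multiset.toFinsupp_apply,
    Multiset.coe_count, vertexCount, ← Nat.cast_add, Nat.cast_inj]

end Socle

theorem socle_monomials_of_unicyclic_general {V R : Type*} [Finite V] [CommSemiring R]
    [Nontrivial R] {G : SimpleGraph V} (hconn : G.Connected) {k : ℕ} {v : V} {c : G.Walk v v}
    (hc : c.IsCycle) (hlen : c.length = 2 * k + 1)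
    (huniq : ∀ (w : V) (p : G.Walk w w), p.IsCycle → ∀ e, e ∈ p.edges ↔ e ∈ c.edges)
    (m : ℕ) (d : V →₀ ℕ) :
    (monomial d (1 : R) ∈ (edgeIdeal R G ^ m).colon (idealOfVars V R) ∧
        monomial d (1 : R) ∉ edgeIdeal R G ^ m) ↔
      ∃ (E₁ : Finset (Sym2 V)) (me : Sym2 V → ℕ),
        ↑E₁ ⊆ G.edgeSet ∧ innerEdges c ⊆ ↑E₁ ∧ (∀ e ∈ E₁, 1 ≤ me e) ∧
        k + 1 ≤ m ∧ ∑ e ∈ E₁, me e = m - (k + 1) ∧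
        monomial d (1 : R) = (c.support.tail.map X).prod * ∏ e ∈ E₁, edgeMonomial R e ^ me e := by
  cases nonempty_fintype V
  classical
  have hinj := weightedDegree_injective hconn (hlen ▸ odd_two_mul_add_one k) hc huniq
  have hd : (0 : V → ℤ) ≤ fun v => (d v : ℤ) := fun v => Int.natCast_nonneg _
  rw [monomial_mem_colon_and_notMem_iff_isCritical,
    isCritical_iff_exists_weights hinj hconn hc hlen hd]
  simp only [← monomial_sum_smul_edgeMultidegree]
  rw [← exists_finset_weights_iff (fun e he => he.1) edgeMultidegree fun n x =>
    k + 1 ≤ m ∧ n = m - (k + 1) ∧ monomial d (1 : R) = (c.support.tail.map X).prod * monomial x 1]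
  simp only [← coe_eq_vertexCount_add_weightedDegree_iff]
  have hsum_iff : ∀ f : G.edgeSet → ℕ, ∑ e, (f e : ℤ) + (k + 1) = m ↔
      k + 1 ≤ m ∧ ∑ e, f e = m - (k + 1) := fun f => by
    rw [← Nat.cast_sum]
    omega
  constructor
  · rintro ⟨f, hf, hinner, hsum, hdeg⟩
    lift f to G.edgeSet → ℕ using hf
    obtain ⟨hkm, hsum⟩ := (hsum_iff f).1 hsum
    exact ⟨f, fun e he => Int.ofNat_le.1 (hinner e he), hkm, hsum, hdeg⟩
  · rintro ⟨f, hinner, hkm, hsum, hdeg⟩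
    exact ⟨fun e => f e, fun _ => Int.natCast_nonneg _, fun e he => Int.ofNat_le.2 (hinner e he),
      (hsum_iff f).2 ⟨hkm, hsum⟩, hdeg⟩

/-- For a connected unicyclic graph `G` with unique odd cycle of length `2k+1`
and vertex set `{x₁,…,x_{2k+1}}` and `I = I(G)`, a monomial `u` lies in `(Iᵐ : 𝔪) \ Iᵐ`
if and only if `u = x₁⋯x_{2k+1}·∏_{e ∈ E₁} e^{m_e}` for some `E₁ ⊆ E(G)` containing `E*(G)`
and positive integers `m_e` with `Σ m_e = m - k - 1`. -/
theorem socle_monomials_of_unicyclic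
    {K : Type*} [Field K] {n : ℕ} (G : SimpleGraph (Fin n))
    (hconn : G.Connected)
    (k : ℕ) (v : Fin n) (c : G.Walk v v) (hc : c.IsCycle) (hlen : c.length = 2 * k + 1)
    -- `c` is the unique cycle of `G`
    (huniq : ∀ (w : Fin n) (p : G.Walk w w), p.IsCycle → ∀ e, e ∈ p.edges ↔ e ∈ c.edges)
    (I : Ideal (MvPolynomial (Fin n) K))
    (hI : I = Ideal.span {f | ∃ i j, G.Adj i j ∧ f = X i * X j})
    (mI : Ideal (MvPolynomial (Fin n) K)) (hmI : mI = Ideal.span (Set.range X))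
    -- `E*(G)`: edges not on the cycle and not leaves
    (Estar : Set (Sym2 (Fin n)))
    (hEstar : Estar = {e | e ∈ G.edgeSet ∧ e ∉ c.edges ∧ ¬ IsLeafEdge G e})
    (m : ℕ) (hm : 1 ≤ m) (du : Fin n →₀ ℕ) :
    (monomial du (1 : K) ∈ (I ^ m).colon mI ∧ monomial du (1 : K) ∉ I ^ m) ↔
      ∃ (E₁ : Finset (Sym2 (Fin n))) (me : Sym2 (Fin n) → ℕ),
        ↑E₁ ⊆ G.edgeSet ∧ Estar ⊆ ↑E₁ ∧ (∀ e ∈ E₁, 1 ≤ me e) ∧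
        k + 1 ≤ m ∧ (∑ e ∈ E₁, me e) = m - (k + 1) ∧
        monomial du (1 : K) =
          (c.support.tail.map X).prod * ∏ e ∈ E₁, edgeMon K e ^ me e := by
  subst hI hmI hEstar
  exact socle_monomials_of_unicyclic_general hconn hc hlen huniq m du
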